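/- Let G be a countable group of uniform local polynomial volume-growth of degree d (every finitely generated subgroup has polynomial volume-growth of degree at most d) and let Φ = {id}. Then G has Φ-bounded packing: there exists k (one may take k = 2·12^d) such that for every finite set B_0 ⊆ G there is a finite symmetric set B ⊇ B_0 ∪ {1_G} with the property that |T| ≤ k whenever T ⊆ B^6 and (T T^{-1} \ {1_G}) ∩ B = ∅. -/

import Mathlib

open scoped Pointwise

/-- The left translates `x ↦ f (g * x)` of a finitely supported function, as points of `ℓ²(G)`. -/
noncomputable def leftTranslate {G : Type*} [Group G] (f : G →₀ ℝ) (g : G) :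
    lp (fun _ : G => ℝ) 2 :=
  ⟨fun x => f (g * x), (memℓp_zero (by
    refine (f.hasFiniteSupport.preimage (mul_right_injective g).injOn).subset ?_
    intro x hx
    exact hx)).of_exponent_ge zero_le⟩

theorem leftTranslate_apply {G : Type*} [Group G] (f : G →₀ ℝ) (g x : G) :
    leftTranslate f g x = f (g * x) := rfl

theorem norm_leftTranslate_sub_sq {G : Type*} [Group G] (f : G →₀ ℝ) (s t : G) :
    ‖leftTranslate f s - leftTranslate f t‖ ^ 2 = ∑' x, (f (s * x) - f (t * x)) ^ 2 := by
  rw [← real_inner_self_eq_norm_sq, lp.inner_eq_tsum]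
  refine tsum_congr fun x => ?_
  rw [real_inner_self_eq_norm_sq, Real.norm_eq_abs, sq_abs, lp.coeFn_sub, Pi.sub_apply,
    leftTranslate_apply, leftTranslate_apply]

theorem norm_leftTranslate_sub {G : Type*} [Group G] (f : G →₀ ℝ) (s t : G) :
    ‖leftTranslate f s - leftTranslate f t‖ = ‖leftTranslate f (s * t⁻¹) - leftTranslate f 1‖ := by
  refine (sq_eq_sq₀ (norm_nonneg _) (norm_nonneg _)).1 ?_
  rw [norm_leftTranslate_sub_sq, norm_leftTranslate_sub_sq, ← (Equiv.mulLeft t⁻¹).tsum_eq]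
  refine tsum_congr fun x => ?_
  simp [mul_assoc]

/-- A function varying by at most one under `a` moves by a bounded amount in `ℓ²`. -/
theorem norm_leftTranslate_sub_one_sq_le {G : Type*} [Group G] (f : G →₀ ℝ) (a : G)
    (ha : ∀ x, |f (a * x) - f x| ≤ 1) :
    ‖leftTranslate f a - leftTranslate f 1‖ ^ 2 ≤ 2 * (f.support.card : ℝ) := by
  classical
  rw [norm_leftTranslate_sub_sq, tsum_eq_sum (s := f.support ∪ f.support.image (a⁻¹ * ·))]
  · calc _ ≤ ∑ x ∈ f.support ∪ f.support.image (a⁻¹ * ·), (1 : ℝ) := by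
          refine Finset.sum_le_sum fun x _ => ?_
          rw [one_mul, sq_le_one_iff_abs_le_one]
          exact ha x
      _ = ((f.support ∪ f.support.image (a⁻¹ * ·)).card : ℝ) := by simp
      _ ≤ ((f.support.card + f.support.card : ℕ) : ℝ) := by
          exact_mod_cast (Finset.card_union_le _ _).trans
            (Nat.add_le_add_left Finset.card_image_le _)
      _ = _ := by push_cast; ring
  · intro x hx
    simp only [Finset.mem_union, Finset.mem_image, not_or, not_exists, not_and] at hx
    have h1 : f x = 0 := Finsupp.notMem_support_iff.1 hx.1
    have h2 : f (a * x) = 0 := by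
      by_contra h
      exact hx.2 (a * x) (Finsupp.mem_support_iff.2 h) (by simp)
    simp [h1, h2]

/-- Translates with disjoint supports are at distance `√2 ‖f‖`. -/
theorem norm_leftTranslate_sub_one_sq_of_disjoint {G : Type*} [Group G] (f : G →₀ ℝ) (g : G)
    (hg : ∀ x, f (g * x) * f x = 0) :
    ‖leftTranslate f g - leftTranslate f 1‖ ^ 2 = 2 * ∑ x ∈ f.support, f x ^ 2 := by
  have hs : Summable fun x => f x ^ 2 := by
    refine summable_of_hasFiniteSupport (f.hasFiniteSupport.subset fun x hx => ?_)
    intro h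
    exact hx (by simp [h])
  have hs' : Summable fun x => f (g * x) ^ 2 := (Equiv.mulLeft g).summable_iff.2 hs
  have h1 : ∑' x, f x ^ 2 = ∑ x ∈ f.support, f x ^ 2 :=
    tsum_eq_sum fun x hx => by simp [Finsupp.notMem_support_iff.1 hx]
  have h2 : ∑' x, f (g * x) ^ 2 = ∑' x, f x ^ 2 :=
    (Equiv.mulLeft g).tsum_eq fun x => f x ^ 2
  rw [norm_leftTranslate_sub_sq, two_mul, ← h1]
  nth_rewrite 1 [← h2]
  rw [← hs'.tsum_add hs]
  refine tsum_congr fun x => ?_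
  rw [one_mul]
  linear_combination -2 * hg x

/-- Three points of a ball of radius `s` are not pairwise `7/4 * s`-separated. -/
theorem not_three_separated {E : Type*} [NormedAddCommGroup E] [InnerProductSpace ℝ E]
    {s : ℝ} {y a b c : E} (ha : ‖y - a‖ ≤ s) (hb : ‖y - b‖ ≤ s) (hc : ‖y - c‖ ≤ s)
    (hab : 7 / 4 * s < ‖a - b‖) (hac : 7 / 4 * s < ‖a - c‖) (hbc : 7 / 4 * s < ‖b - c‖) :
    False := by
  have hs : 0 ≤ s := (norm_nonneg _).trans ha
  obtain ⟨u, hu⟩ : ∃ u, u = y - a := ⟨_, rfl⟩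
  obtain ⟨v, hv⟩ : ∃ v, v = y - b := ⟨_, rfl⟩
  obtain ⟨w, hw⟩ : ∃ w, w = y - c := ⟨_, rfl⟩
  rw [show a - b = v - u by rw [hu, hv]; abel] at hab
  rw [show a - c = w - u by rw [hu, hw]; abel] at hac
  rw [show b - c = w - v by rw [hv, hw]; abel] at hbc
  rw [← hu] at ha
  rw [← hv] at hb
  rw [← hw] at hc
  have h0 := sq_nonneg ‖u + v + w‖
  have sq_lt : ∀ {x : E}, 7 / 4 * s < ‖x‖ → (7 / 4 * s) ^ 2 < ‖x‖ ^ 2 := fun h =>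
    pow_lt_pow_left₀ h (by positivity) two_ne_zero
  have sq_le : ∀ {x : E}, ‖x‖ ≤ s → ‖x‖ ^ 2 ≤ s ^ 2 := fun h =>
    pow_le_pow_left₀ (norm_nonneg _) h 2
  have h1 := sq_lt hab
  have h2 := sq_lt hac
  have h3 := sq_lt hbc
  have h4 := sq_le ha
  have h5 := sq_le hb
  have h6 := sq_le hc
  rw [norm_sub_sq_real] at h1 h2 h3
  rw [norm_add_sq_real, norm_add_sq_real, inner_add_left] at h0
  rw [real_inner_comm] at h1 h2 h3
  nlinarith [sq_nonneg s]

/-- Packing bound for an invariant Hilbertian length function `g ↦ ‖p g - p 1‖`. -/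
theorem card_mul_card_le_of_separated {G E : Type*} [Group G] [NormedAddCommGroup E]
    [InnerProductSpace ℝ E] {p : G → E}
    (hp : ∀ s t, ‖p s - p t‖ = ‖p (s * t⁻¹) - p 1‖) {s : ℝ} {S U T : Finset G}
    (hS : ∀ g ∈ S, ‖p g - p 1‖ ≤ s) (hU : ∀ g, ‖p g - p 1‖ ≤ 23 / 2 * s → g ∈ U)
    (hT : ∀ t ∈ T, ‖p t - p 1‖ ≤ 6 * (7 / 4 * s))
    (hsep : ∀ t₁ ∈ T, ∀ t₂ ∈ T, t₁ ≠ t₂ → 7 / 4 * s < ‖p t₁ - p t₂‖) :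
    T.card * S.card ≤ U.card * 2 := by
  classical
  refine Finset.card_mul_le_card_mul (fun t y => ‖p y - p t‖ ≤ s) (fun t ht => ?_)
    fun y _ => ?_
  · rw [← Finset.card_image_of_injective S (mul_left_injective t)]
    refine Finset.card_le_card fun y hy => ?_
    obtain ⟨b, hb, rfl⟩ := Finset.mem_image.1 hy
    have h1 : ‖p (b * t) - p t‖ ≤ s := by
      rw [hp, mul_inv_cancel_right]
      exact hS b hb
    refine Finset.mem_filter.2 ⟨hU _ ?_, h1⟩
    have h2 := norm_sub_le_norm_sub_add_norm_sub (p (b * t)) (p t) (p 1)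
    linarith [hT t ht]
  · by_contra! h
    obtain ⟨a, b, c, ha, hb, hc, hab, hac, hbc⟩ := Finset.two_lt_card_iff.1 h
    rw [Finset.mem_bipartiteBelow] at ha hb hc
    exact not_three_separated ha.2 hb.2 hc.2 (hsep a ha.1 b hb.1 hab)
      (hsep a ha.1 c hc.1 hac) (hsep b hb.1 c hc.1 hbc)

/-- The tent function `x ↦ max (n - |x|) 0` for the word length with respect to `A`. -/
noncomputable def tent {G : Type*} [Group G] [DecidableEq G] (A : Finset G) (hA : 1 ∈ A)
    (n : ℕ) : G →₀ ℝ :=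
  Finsupp.onFinset (A ^ n) (fun x => (((Finset.range n).filter fun k => x ∈ A ^ k).card : ℝ))
    (by
      intro x hx
      obtain ⟨k, hk⟩ := Finset.card_ne_zero.1 (Nat.cast_ne_zero.1 hx)
      rw [Finset.mem_filter, Finset.mem_range] at hk
      exact Finset.pow_subset_pow_right hA hk.1.le hk.2)

theorem tent_apply {G : Type*} [Group G] [DecidableEq G] (A : Finset G) (hA : 1 ∈ A)
    (n : ℕ) (x : G) :
    tent A hA n x = (((Finset.range n).filter fun k => x ∈ A ^ k).card : ℝ) := rfl

theorem support_tent_subset {G : Type*} [Group G] [DecidableEq G] (A : Finset G) (hA : 1 ∈ A)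
    (n : ℕ) : (tent A hA n).support ⊆ A ^ n :=
  Finsupp.support_onFinset_subset

theorem tent_le_tent_mul_add_one {G : Type*} [Group G] [DecidableEq G] (A : Finset G)
    (hA : 1 ∈ A) (n : ℕ) {a : G} (ha : a ∈ A) (x : G) :
    tent A hA n x ≤ tent A hA n (a * x) + 1 := by
  rw [tent_apply, tent_apply]
  norm_cast
  rw [← Finset.card_image_of_injective _ Nat.succ_injective]
  refine (Finset.card_le_card (t := insert n ((Finset.range n).filter
    fun k => a * x ∈ A ^ k)) ?_).trans (Finset.card_insert_le _ _)
  intro k hk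
  obtain ⟨j, hj, rfl⟩ := Finset.mem_image.1 hk
  rw [Finset.mem_filter, Finset.mem_range] at hj
  rw [Finset.mem_insert, Finset.mem_filter, Finset.mem_range]
  have h : a * x ∈ A ^ (j + 1) := by
    rw [pow_succ']
    exact Finset.mul_mem_mul ha hj.2
  rcases Nat.lt_or_ge (j + 1) n with h1 | h1
  · exact Or.inr ⟨h1, h⟩
  · exact Or.inl (by omega)

theorem abs_tent_mul_sub_le {G : Type*} [Group G] [DecidableEq G] (A : Finset G)
    (hA : 1 ∈ A) (hinv : A⁻¹ = A) (n : ℕ) {a : G} (ha : a ∈ A) (x : G) :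
    |tent A hA n (a * x) - tent A hA n x| ≤ 1 := by
  have h1 := tent_le_tent_mul_add_one A hA n ha x
  have h2 := tent_le_tent_mul_add_one A hA n
    (by rw [← hinv]; exact Finset.inv_mem_inv ha : a⁻¹ ∈ A) (a * x)
  rw [inv_mul_cancel_left] at h2
  rw [abs_le]
  constructor <;> linarith

theorem le_tent {G : Type*} [Group G] [DecidableEq G] (A : Finset G) (hA : 1 ∈ A) (q : ℕ)
    {x : G} (hx : x ∈ A ^ q) : (q : ℝ) ≤ tent A hA (2 * q) x := by
  rw [tent_apply, Nat.cast_le]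
  calc q = (Finset.Ico q (2 * q)).card := by rw [Nat.card_Ico]; omega
    _ ≤ _ := by
      refine Finset.card_le_card fun k hk => ?_
      rw [Finset.mem_Ico] at hk
      exact Finset.mem_filter.2
        ⟨Finset.mem_range.2 hk.2, Finset.pow_subset_pow_right hA hk.1 hx⟩

theorem le_sum_tent_sq {G : Type*} [Group G] [DecidableEq G] (A : Finset G) (hA : 1 ∈ A)
    (q : ℕ) :
    (q : ℝ) ^ 2 * ((A ^ q).card : ℝ) ≤
      ∑ x ∈ (tent A hA (2 * q)).support, tent A hA (2 * q) x ^ 2 := by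
  calc (q : ℝ) ^ 2 * ((A ^ q).card : ℝ) = ∑ x ∈ A ^ q, (q : ℝ) ^ 2 := by
        rw [Finset.sum_const, nsmul_eq_mul, mul_comm]
    _ ≤ ∑ x ∈ A ^ q, tent A hA (2 * q) x ^ 2 :=
        Finset.sum_le_sum fun x hx => pow_le_pow_left₀ (by positivity) (le_tent A hA q hx) 2
    _ ≤ ∑ x ∈ (tent A hA (2 * q)).support ∪ A ^ q, tent A hA (2 * q) x ^ 2 :=
        Finset.sum_le_sum_of_subset_of_nonneg Finset.subset_union_right
          fun x _ _ => sq_nonneg _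
    _ = _ := by
        refine (Finset.sum_subset Finset.subset_union_left fun x _ hx => ?_).symm
        simp [Finsupp.notMem_support_iff.1 hx]

/-- Small displacement of the tent function forces small word length. -/
theorem mem_pow_of_norm_leftTranslate_tent_lt {G : Type*} [Group G] [DecidableEq G]
    (A : Finset G) (hA : 1 ∈ A) (hinv : A⁻¹ = A) (q : ℕ) {g : G}
    (hg : ‖leftTranslate (tent A hA (2 * q)) g - leftTranslate (tent A hA (2 * q)) 1‖ ^ 2 <
      2 * ((q : ℝ) ^ 2 * ((A ^ q).card : ℝ))) : g ∈ A ^ (4 * q) := by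
  by_contra hmem
  rw [norm_leftTranslate_sub_one_sq_of_disjoint] at hg
  · linarith [le_sum_tent_sq A hA q]
  intro x
  by_contra h
  have h1 := support_tent_subset A hA _ (Finsupp.mem_support_iff.2 (left_ne_zero_of_mul h))
  have h2 := support_tent_subset A hA _ (Finsupp.mem_support_iff.2 (right_ne_zero_of_mul h))
  have h3 : x⁻¹ ∈ A ^ (2 * q) := by
    have := Finset.inv_mem_inv h2
    rwa [← inv_pow, hinv] at this
  refine hmem ?_
  rw [show 4 * q = 2 * q + 2 * q by ring, pow_add]
  simpa using Finset.mul_mem_mul h1 h3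

/-- Polynomially bounded sequences have arbitrarily large doubling scales. -/
theorem exists_doubling_scale (v : ℕ → ℝ) (hv : ∀ n, 1 ≤ v n) (d : ℕ) (c : ℝ)
    (hc : ∀ r : ℕ, 1 ≤ r → v r ≤ c * (r : ℝ) ^ d) (Q : ℕ) :
    ∃ q : ℕ, Q ≤ q ∧ v (2 * q) ≤ 2 ^ (d + 1) * v q := by
  by_contra! h
  have hpow : ∀ j : ℕ, (2 : ℝ) ^ ((d + 1) * j) ≤ v (2 ^ j * (Q + 1)) := by
    intro j
    induction j with
    | zero => simpa using hv (Q + 1)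
    | succ j ih =>
      have hQ : Q ≤ 2 ^ j * (Q + 1) := by nlinarith [Nat.one_le_two_pow (n := j)]
      have h1 := h _ hQ
      rw [pow_succ' 2 j, mul_assoc 2, mul_add, pow_add, mul_one]
      nlinarith [pow_pos (two_pos : (0 : ℝ) < 2) (d + 1)]
  obtain ⟨j, hj⟩ := pow_unbounded_of_one_lt (c * (Q + 1 : ℝ) ^ d) (one_lt_two : (1 : ℝ) < 2)
  have h1 := (hpow j).trans (hc _ (Nat.one_le_iff_ne_zero.2 (by positivity)))
  push_cast at h1
  rw [mul_pow, ← pow_mul, add_mul, pow_add, one_mul, mul_comm d j] at h1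
  have h2 : (0 : ℝ) < 2 ^ (j * d) := by positivity
  nlinarith

theorem exists_small_ratio (d : ℕ) (C : ℝ) :
    ∃ M : ℕ, ∀ m, M ≤ m → ∀ V : ℕ → ℕ, 1 ≤ V 0 →
      (V m : ℝ) ≤ C * ((23 / 2 : ℝ) ^ m) ^ d → ∃ i < m, V (i + 1) ≤ 12 ^ d * V i := by
  obtain ⟨M, hM⟩ : ∃ M : ℕ, ∀ m, M ≤ m →
      C * ((23 / 2 : ℝ) ^ m) ^ d < ((12 : ℝ) ^ d) ^ m + m := by
    rcases Nat.eq_zero_or_pos d with rfl | hd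
    · obtain ⟨M, hM⟩ := exists_nat_gt C
      refine ⟨M, fun m hm => ?_⟩
      have : (M : ℝ) ≤ m := by exact_mod_cast hm
      simp only [pow_zero, one_pow, mul_one]
      linarith
    · obtain ⟨M, hM⟩ := pow_unbounded_of_one_lt C (by norm_num : (1 : ℝ) < 24 / 23)
      refine ⟨M, fun m hm => ?_⟩
      have h1 : C < ((24 / 23 : ℝ) ^ m) ^ d :=
        hM.trans_le ((pow_le_pow_right₀ (by norm_num) hm).trans
          (le_self_pow₀ (one_le_pow₀ (by norm_num)) hd.ne'))
      have h2 : ((12 : ℝ) ^ d) ^ m = ((24 / 23 : ℝ) ^ m) ^ d * ((23 / 2 : ℝ) ^ m) ^ d := by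
        rw [← mul_pow, ← mul_pow, pow_right_comm]
        norm_num
      rw [h2]
      have h3 : (0 : ℝ) < ((23 / 2 : ℝ) ^ m) ^ d := by positivity
      nlinarith [(Nat.cast_nonneg m : (0 : ℝ) ≤ m)]
  refine ⟨M, fun m hm V hV0 hV => ?_⟩
  by_contra! h
  have key : ∀ i ≤ m, (12 ^ d) ^ i + i ≤ V i := by
    intro i
    induction i with
    | zero => intro _; simpa using hV0
    | succ i ih =>
      intro hi
      have h1 := ih (by omega)
      have h2 := h i (by omega)
      have h3 : 1 ≤ 12 ^ d := Nat.one_le_pow _ _ (by norm_num)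
      rw [pow_succ]
      nlinarith
  have h1 : (((12 ^ d) ^ m + m : ℕ) : ℝ) ≤ V m := by exact_mod_cast key m le_rfl
  push_cast at h1
  linarith [hM m hm]

theorem norm_sub_one_le_of_mem_pow {G E : Type*} [Group G] [DecidableEq G]
    [NormedAddCommGroup E] {p : G → E}
    (hp : ∀ s t, ‖p s - p t‖ = ‖p (s * t⁻¹) - p 1‖) {B : Finset G} {r : ℝ}
    (hB : ∀ g ∈ B, ‖p g - p 1‖ ≤ r) (k : ℕ) : ∀ g ∈ B ^ k, ‖p g - p 1‖ ≤ k * r := by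
  induction k with
  | zero =>
    intro g hg
    rw [pow_zero, Finset.mem_one] at hg
    simp [hg]
  | succ k ih =>
    intro g hg
    rw [pow_succ] at hg
    obtain ⟨a, ha, b, hb, rfl⟩ := Finset.mem_mul.1 hg
    have h1 := norm_sub_le_norm_sub_add_norm_sub (p (a * b)) (p b) (p 1)
    rw [hp (a * b) b, mul_inv_cancel_right] at h1
    push_cast
    linarith [ih a ha, hB b hb]

/-- A countable group of uniform local polynomial volume-growth of degree `d`
has `{id}`-bounded packing with constant `k = 2·12^d`. -/
theorem stmt3 {G : Type*} [Group G] [Countable G] [DecidableEq G] (d : ℕ)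
    (hgrowth : ∀ B : Finset G, (1 : G) ∈ B → B⁻¹ = B →
      ∃ c : ℝ, 0 < c ∧ ∀ r : ℕ, 1 ≤ r → ((B ^ r).card : ℝ) ≤ c * (r : ℝ) ^ d) :
    ∀ B₀ : Finset G, ∃ B : Finset G, B₀ ⊆ B ∧ (1 : G) ∈ B ∧ B⁻¹ = B ∧
      ∀ T : Finset G, T ⊆ B ^ 6 →
        (∀ t₁ ∈ T, ∀ t₂ ∈ T, t₁ * t₂⁻¹ ≠ 1 → t₁ * t₂⁻¹ ∉ B) →
        T.card ≤ 2 * 12 ^ d := by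
  intro B₀
  obtain ⟨A, hB₀, hA, hinv⟩ : ∃ A : Finset G, B₀ ⊆ A ∧ 1 ∈ A ∧ A⁻¹ = A := by
    refine ⟨insert 1 (B₀ ∪ B₀⁻¹), fun x hx => by simp [hx], by simp, ?_⟩
    ext x
    simp [or_comm]
  obtain ⟨c, hc0, hc⟩ := hgrowth A hA hinv
  have hcard : ∀ n, 1 ≤ ((A ^ n).card : ℝ) := fun n => by
    exact_mod_cast Finset.card_pos.2 ⟨1, Finset.one_mem_pow hA⟩
  obtain ⟨K, hK⟩ : ∃ K : ℝ, K = 2 ^ (d + 1) := ⟨_, rfl⟩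
  have hK1 : 1 ≤ K := hK ▸ one_le_pow₀ one_le_two
  have hK0 : 0 < K := one_pos.trans_le hK1
  obtain ⟨M, hM⟩ := exists_small_ratio d (c * (4 * (K * (23 / 2))) ^ d)
  obtain ⟨Q, hQ⟩ := exists_nat_gt (K * (23 / 2 : ℝ) ^ M)
  obtain ⟨q, hQq, hdouble⟩ := exists_doubling_scale (fun n => ((A ^ n).card : ℝ)) hcard d c hc Q
  rw [← hK] at hdouble
  have hq : K * (23 / 2 : ℝ) ^ M < q := hQ.trans_le (by exact_mod_cast hQq)
  have hq0 : (0 : ℝ) < q := lt_of_le_of_lt (by positivity) hq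
  obtain ⟨m, hmM, hm1, hm2⟩ : ∃ m, M ≤ m ∧ K * (23 / 2 : ℝ) ^ m < q ∧
      q ≤ K * (23 / 2 : ℝ) ^ (m + 1) := by
    have hex : ∃ k, q ≤ K * (23 / 2 : ℝ) ^ (M + k + 1) := by
      obtain ⟨k, hk⟩ := pow_unbounded_of_one_lt (q : ℝ) (by norm_num : (1 : ℝ) < 23 / 2)
      refine ⟨k, hk.le.trans ?_⟩
      calc (23 / 2 : ℝ) ^ k ≤ (23 / 2 : ℝ) ^ (M + k + 1) :=
            pow_le_pow_right₀ (by norm_num) (by omega)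
        _ ≤ _ := le_mul_of_one_le_left (by positivity) hK1
    classical
    refine ⟨M + Nat.find hex, by omega, ?_, Nat.find_spec hex⟩
    rcases Nat.eq_zero_or_pos (Nat.find hex) with h0 | h0
    · rw [h0]; exact hq
    · have := Nat.find_min hex (Nat.sub_lt h0 one_pos)
      rw [not_le, show M + (Nat.find hex - 1) + 1 = M + Nat.find hex by omega] at this
      exact this
  set p := leftTranslate (tent A hA (2 * q)) with hpdef
  have hp : ∀ s t, ‖p s - p t‖ = ‖p (s * t⁻¹) - p 1‖ := norm_leftTranslate_sub _
  obtain ⟨s₀, hs₀pos, hs₀sq⟩ : ∃ s₀ : ℝ, 0 < s₀ ∧ s₀ ^ 2 = 2 * ((A ^ (2 * q)).card : ℝ) :=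
    ⟨√(2 * ((A ^ (2 * q)).card : ℝ)), Real.sqrt_pos.2 (by linarith [hcard (2 * q)]),
      Real.sq_sqrt (by positivity)⟩
  have hgen : ∀ a ∈ A, ‖p a - p 1‖ ≤ s₀ := by
    intro a ha
    refine (sq_le_sq₀ (norm_nonneg _) hs₀pos.le).1 ((norm_leftTranslate_sub_one_sq_le _ a
      (abs_tent_mul_sub_le A hA hinv _ ha)).trans ?_)
    rw [hs₀sq]
    gcongr
    exact support_tent_subset A hA _
  have hmem : ∀ g, ‖p g - p 1‖ ≤ (23 / 2) ^ m * s₀ → g ∈ A ^ (4 * q) := by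
    intro g hg
    refine mem_pow_of_norm_leftTranslate_tent_lt A hA hinv q ?_
    have hcq := hcard q
    have hKK : K ≤ K ^ 2 := le_self_pow₀ hK1 two_ne_zero
    generalize ((A ^ q).card : ℝ) = v at hcq hdouble ⊢
    calc ‖p g - p 1‖ ^ 2 ≤ ((23 / 2) ^ m * s₀) ^ 2 := pow_le_pow_left₀ (norm_nonneg _) hg 2
      _ = ((23 / 2) ^ m) ^ 2 * (2 * ((A ^ (2 * q)).card : ℝ)) := by rw [mul_pow, hs₀sq]
      _ ≤ ((23 / 2) ^ m) ^ 2 * (2 * (K ^ 2 * v)) := by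
          refine mul_le_mul_of_nonneg_left ?_ (by positivity)
          nlinarith
      _ = 2 * ((K * (23 / 2) ^ m) ^ 2 * v) := by ring
      _ < _ := by
          have := pow_lt_pow_left₀ hm1 (by positivity) two_ne_zero
          nlinarith
  let ball : ℝ → Finset G := fun s => (A ^ (4 * q)).filter fun g => ‖p g - p 1‖ ≤ s
  have mem_ball : ∀ {s : ℝ}, s ≤ (23 / 2) ^ m * s₀ → ∀ g, g ∈ ball s ↔ ‖p g - p 1‖ ≤ s :=
    fun hs g => Finset.mem_filter.trans ⟨fun h => h.2, fun h => ⟨hmem g (h.trans hs), h⟩⟩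
  have one_mem_ball : ∀ {s : ℝ}, 0 ≤ s → 1 ∈ ball s := fun hs =>
    Finset.mem_filter.2 ⟨Finset.one_mem_pow hA, by simpa using hs⟩
  obtain ⟨i, him, hi⟩ := hM m hmM (fun i => (ball ((23 / 2) ^ i * s₀)).card)
    (Finset.card_pos.2 ⟨1, one_mem_ball (by positivity)⟩) (by
      have h4q : 1 ≤ 4 * q := by
        have : 0 < q := by exact_mod_cast hq0
        omega
      calc ((ball ((23 / 2) ^ m * s₀)).card : ℝ) ≤ ((A ^ (4 * q)).card : ℝ) := by
            exact_mod_cast Finset.card_filter_le _ _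
        _ ≤ c * ((4 * q : ℕ) : ℝ) ^ d := hc _ h4q
        _ ≤ c * (4 * (K * (23 / 2 : ℝ) ^ (m + 1))) ^ d := by
            push_cast
            gcongr
        _ = _ := by
            rw [mul_assoc c, ← mul_pow]
            ring_nf)
  obtain ⟨s, hs⟩ : ∃ s : ℝ, s = (23 / 2) ^ i * s₀ := ⟨_, rfl⟩
  have hs0 : 0 < s := by rw [hs]; positivity
  have hsucc : (23 / 2) ^ (i + 1) * s₀ = 23 / 2 * s := by rw [hs]; ring
  have hle : 23 / 2 * s ≤ (23 / 2) ^ m * s₀ := by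
    rw [← hsucc]
    gcongr
    · norm_num
    · omega
  have hmemB := mem_ball (s := 7 / 4 * s) (by linarith)
  refine ⟨ball (7 / 4 * s), fun x hx => ?_, one_mem_ball (by positivity), ?_, ?_⟩
  · rw [hmemB]
    refine (hgen x (hB₀ hx)).trans ?_
    have : s₀ ≤ s := hs ▸ le_mul_of_one_le_left hs₀pos.le (one_le_pow₀ (by norm_num))
    linarith
  · ext g
    rw [Finset.mem_inv', hmemB, hmemB, ← one_mul g⁻¹, ← hp, norm_sub_rev]
  · intro T hT hsep
    have hcount := card_mul_card_le_of_separated hp (s := s) (S := ball s)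
      (U := ball (23 / 2 * s)) (T := T)
      (fun g hg => (Finset.mem_filter.1 hg).2) (fun g hg => (mem_ball hle g).2 hg)
      (fun t ht => by
        simpa using norm_sub_one_le_of_mem_pow hp (fun g hg => (hmemB g).1 hg) 6 t (hT ht))
      (fun t₁ h₁ t₂ h₂ hne => by
        have := hsep t₁ h₁ t₂ h₂ (fun h => hne (mul_inv_eq_one.1 h))
        rwa [hmemB, not_le, ← hp] at this)
    have hpos : 0 < (ball s).card := Finset.card_pos.2 ⟨1, one_mem_ball hs0.le⟩
    simp only [hsucc, ← hs] at hi
    refine Nat.le_of_mul_le_mul_right (hcount.trans ?_) hpos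
    rw [mul_comm _ 2, mul_assoc]
    exact Nat.mul_le_mul_left 2 hi
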